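/- Let 1/2 < γ ≤ 1. There exists a constant C_γ ≥ 1, depending only on γ, such that for any two γ-Hölder continuous functions X, Y : [0,1] → ℝ³ the Riemann–Stieltjes sums Σ_{i} X_{ξ_i} (Y_{ξ_{i+1}} − Y_{ξ_i}) over partitions η = ξ_0 < ξ_1 < ... < ξ_n = ξ of [η,ξ] converge to a limit ∫_η^ξ X_ρ dY_ρ as the mesh of the partition tends to zero (the Young integral), this limit coincides with the Riemann–Stieltjes integral whenever the latter exists, and for all ξ, η ∈ [0,1] one has |∫_η^ξ (X_ρ − X_η) dY_ρ| ≤ C_γ ‖X‖_γ ‖Y‖_γ |ξ − η|^{2γ}. -/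

import Mathlib

/-!
Write `Ξ s t = X s ⊗ (Y t - Y s)`. Its defect of additivity is
`Ξ s t - Ξ s u - Ξ u t = (X s - X u) ⊗ (Y t - Y u)`, which is at most `‖X‖_γ ‖Y‖_γ (t - s) ^ (2γ)`
with exponent `θ = 2γ > 1`; everything follows from this (`AlmostAdd`, `almostAdd_oProd`).

* `maximal_ineq`: every partition sum of `Ξ` over `[a,b]` is within `C K (b - a) ^ θ` of `Ξ a b`,
  uniformly in the partition. Cutting the partition at the interval around the midpoint gives
  the recursion `C = 2 * 2 ^ (-θ) * C + 2`, solvable since `2 ^ (1 - θ) < 1`.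
* `sewing`: the sums of `Ξ` along the dyadic grids truncated at `t` converge geometrically to some
  `J t`. Up to an error tending to zero, the difference of the sums truncated at `t` and at `s` is
  the sum over the grid clamped to `[s,t]`, so the maximal inequality bounds `J t - J s - Ξ s t`
  by `C K (t - s) ^ θ`.
* `rsLimit_of_approx`: since `J` has additive increments, a partition sum of mesh at most `δ`
  differs from `J b - J a` by at most `∑ C K Δᵢ ^ θ ≤ C K δ ^ (θ - 1) (b - a)`.

Hence the integral is `I η ξ = J ξ - J η`.
-/

/- Common framework: Hölder curves on [0,1], Riemann–Stieltjes/Young/rough integrals as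
limits of (compensated) partition sums, controlled paths, and covariations. -/

noncomputable section

open Set Filter Topology MeasureTheory
open scoped ENNReal

/-- Three dimensional Euclidean space. -/
abbrev E3 : Type := EuclideanSpace ℝ (Fin 3)

/-- `ℝ³ ⊗ ℝ³`, realized as (continuous) linear endomorphisms of `ℝ³`. -/
abbrev M3 : Type := E3 →L[ℝ] E3

/-- Outer (tensor) product `a ⊗ b` of two vectors, as the linear map `v ↦ ⟪b, v⟫ • a`. -/
def oProd (a b : E3) : M3 := (innerSL ℝ b).smulRight a

/-- The canonical basis vectors of `ℝ³`. -/
def e3 (k : Fin 3) : E3 := EuclideanSpace.single k 1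

/-- The `i`-th component of a vector of `ℝ³`. -/
def ecomp (i : Fin 3) (v : E3) : ℝ := @inner ℝ _ _ (e3 i) v

/-- The `(i,k)` entry of a matrix. -/
def mentry (i k : Fin 3) (M : M3) : ℝ := ecomp i (M (e3 k))

/-- `γ`-Hölder seminorm `‖X‖_γ` over the interval `[0,1]`. -/
def hSemi {F : Type*} [NormedAddCommGroup F] (γ : ℝ) (X : ℝ → F) : ℝ :=
  sSup {r | ∃ s ∈ Icc (0:ℝ) 1, ∃ t ∈ Icc (0:ℝ) 1, s ≠ t ∧ r = ‖X s - X t‖ / |s - t| ^ γ}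

/-- Supremum norm `‖X‖_∞` over the interval `[0,1]`. -/
def sNorm {F : Type*} [NormedAddCommGroup F] (X : ℝ → F) : ℝ :=
  sSup {r | ∃ s ∈ Icc (0:ℝ) 1, r = ‖X s‖}

/-- The norm `‖X‖_γ^* = ‖X‖_∞ + ‖X‖_γ`. -/
def hStar {F : Type*} [NormedAddCommGroup F] (γ : ℝ) (X : ℝ → F) : ℝ :=
  sNorm X + hSemi γ X

/-- `X` is `γ`-Hölder continuous on `[0,1]`. -/
def HolderOn {F : Type*} [NormedAddCommGroup F] (γ : ℝ) (X : ℝ → F) : Prop :=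
  ∃ C : ℝ, ∀ s ∈ Icc (0:ℝ) 1, ∀ t ∈ Icc (0:ℝ) 1, ‖X s - X t‖ ≤ C * |s - t| ^ γ

/-- A closed continuous curve parametrized by `[0,1]`. -/
def ClosedCurve {F : Type*} [NormedAddCommGroup F] (X : ℝ → F) : Prop :=
  ContinuousOn X (Icc (0:ℝ) 1) ∧ X 0 = X 1

/-- Membership in `𝒞^γ`: closed curve with finite `γ`-Hölder norm. -/
def MemC {F : Type*} [NormedAddCommGroup F] (γ : ℝ) (X : ℝ → F) : Prop :=
  ClosedCurve X ∧ HolderOn γ X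

/-- A partition `a = t 0 ≤ t 1 ≤ ⋯ ≤ t n = b` of the interval `[a,b]`. -/
structure Ptn (a b : ℝ) where
  n : ℕ
  t : ℕ → ℝ
  first : t 0 = a
  last : t n = b
  mono : ∀ i < n, t i ≤ t (i + 1)

/-- The mesh of the partition is at most `δ`. -/
def Ptn.MeshLE {a b : ℝ} (P : Ptn a b) (δ : ℝ) : Prop :=
  ∀ i < P.n, P.t (i + 1) - P.t i ≤ δ

/-- `I` is the limit of the partition sums `S P` as the mesh of `P` tends to zero. -/
def RSLimit {F : Type*} [NormedAddCommGroup F] (a b : ℝ) (S : Ptn a b → F) (I : F) : Prop :=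
  ∀ ε > 0, ∃ δ > 0, ∀ P : Ptn a b, P.MeshLE δ → ‖S P - I‖ ≤ ε

/-- `‖∇^j φ‖ = sup_x ‖∇^j φ(x)‖`. -/
def tnorm {F : Type*} [NormedAddCommGroup F] [NormedSpace ℝ F] (j : ℕ) (φ : E3 → F) : ℝ :=
  sSup (Set.range fun x => ‖iteratedFDeriv ℝ j φ x‖)

/-- `‖∇^m φ‖_n = Σ_{k=0}^n ‖∇^{m+k} φ‖`. -/
def nablaNorm {F : Type*} [NormedAddCommGroup F] [NormedSpace ℝ F]
    (m n : ℕ) (φ : E3 → F) : ℝ :=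
  ∑ k ∈ Finset.range (n + 1), tnorm (m + k) φ

/-- `‖∇^m φ‖_n < ∞` : `φ` is `(m+n)` times continuously differentiable with
`sup_x ‖∇^k φ(x)‖ < ∞` for every `m ≤ k ≤ m+n`. -/
def NablaBdd {F : Type*} [NormedAddCommGroup F] [NormedSpace ℝ F] (m n : ℕ) (φ : E3 → F) : Prop :=
  ContDiff ℝ (m + n) φ ∧
    ∀ k : ℕ, m ≤ k → k ≤ m + n → BddAbove (Set.range fun x => ‖iteratedFDeriv ℝ k φ x‖)

/-- Riemann–Stieltjes sum for the line integral `∫_0^1 A(x - Z_η) dZ_η`. -/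
def youngRS (A : E3 → M3) (Z : ℝ → E3) (x : E3) {a b : ℝ} (P : Ptn a b) : E3 :=
  ∑ i ∈ Finset.range P.n, A (x - Z (P.t i)) (Z (P.t (i + 1)) - Z (P.t i))

/-- `V = V^Z` is the Young velocity field `V^Z(x) = ∫_0^1 A(x - Z_η) dZ_η`, each value being
the limit of Riemann–Stieltjes sums. -/
def IsYoungVelocity (A : E3 → M3) (Z : ℝ → E3) (V : E3 → E3) : Prop :=
  ∀ x : E3, RSLimit 0 1 (fun P => youngRS A Z x P) (V x)

/-- `C` is a constant realizing the Young estimate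
`|∫_η^ξ (X_ρ - X_η) ⊗ dY_ρ| ≤ C ‖X‖_γ ‖Y‖_γ |ξ - η|^{2γ}`. -/
def YoungEstimate (γ C : ℝ) : Prop :=
  ∀ X Y : ℝ → E3, HolderOn γ X → HolderOn γ Y →
    ∀ η ∈ Icc (0:ℝ) 1, ∀ ξ ∈ Icc (0:ℝ) 1, η ≤ ξ →
      ∀ I : M3,
        RSLimit η ξ (fun P => ∑ i ∈ Finset.range P.n,
          oProd (X (P.t i) - X η) (Y (P.t (i + 1)) - Y (P.t i))) I →
        ‖I‖ ≤ C * hSemi γ X * hSemi γ Y * (ξ - η) ^ (2 * γ)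

/-- Continuity of `t ↦ Y(t)` from `[0,T]` into `𝒞^γ` (with the norm `‖·‖_γ^*`). -/
def ContXT (γ T : ℝ) (Y : ℝ → ℝ → E3) : Prop :=
  ∀ t ∈ Icc 0 T, ∀ ε > 0, ∃ δ > 0, ∀ s ∈ Icc 0 T, |s - t| ≤ δ →
    hStar γ (fun ξ => Y s ξ - Y t ξ) ≤ ε

/-- The norm `‖Y‖_{𝐗_T} = sup_{t ∈ [0,T]} ‖Y(t)‖_γ^*`. -/
def xnorm (γ T : ℝ) (Y : ℝ → ℝ → E3) : ℝ :=
  sSup {r | ∃ t ∈ Icc 0 T, r = hStar γ (Y t)}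

/-- Membership in `𝐗_T = C([0,T], 𝒞^γ)`. -/
def MemXT (γ T : ℝ) (Y : ℝ → ℝ → E3) : Prop :=
  (∀ t ∈ Icc 0 T, MemC γ (Y t)) ∧ ContXT γ T Y

/-- The map `F(Y)(t)_ξ = X_ξ + ∫_0^t v_s(Y(s)_ξ) ds`. -/
def Fmap (X : ℝ → E3) (v : ℝ → E3 → E3) (Y : ℝ → ℝ → E3) : ℝ → ℝ → E3 :=
  fun t ξ => X ξ + ∫ s in (0:ℝ)..t, v s (Y s ξ)

/-- The controlled derivative of `F(Y)`:
`F(Y)'(t)_ξ = Id + ∫_0^t ∇v_s(Y(s)_ξ) ∘ Y'(s)_ξ ds`. -/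
def Fmap' (v : ℝ → E3 → E3) (Y : ℝ → ℝ → E3) (Y' : ℝ → ℝ → M3) : ℝ → ℝ → M3 :=
  fun t ξ => ContinuousLinearMap.id ℝ E3
    + ∫ s in (0:ℝ)..t, (fderiv ℝ (v s) (Y s ξ)).comp (Y' s ξ)

/-- `Y` solves the vortex filament equation on `[0,T]` with initial condition `X`,
the velocity fields being given by Young line integrals. -/
def IsYoungSolution (T : ℝ) (A : E3 → M3) (X : ℝ → E3) (Y : ℝ → ℝ → E3) : Prop :=
  ∃ v : ℝ → E3 → E3, (∀ s ∈ Icc 0 T, IsYoungVelocity A (Y s) (v s)) ∧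
    ∀ t ∈ Icc 0 T, ∀ ξ ∈ Icc (0:ℝ) 1, Y t ξ = X ξ + ∫ s in (0:ℝ)..t, v s (Y s ξ)

/-- The same, on the half open interval `[0,T)`. -/
def IsYoungSolutionLt (T : ℝ) (A : E3 → M3) (X : ℝ → E3) (Y : ℝ → ℝ → E3) : Prop :=
  ∃ v : ℝ → E3 → E3, (∀ s ∈ Ico 0 T, IsYoungVelocity A (Y s) (v s)) ∧
    ∀ t ∈ Ico 0 T, ∀ ξ ∈ Icc (0:ℝ) 1, Y t ξ = X ξ + ∫ s in (0:ℝ)..t, v s (Y s ξ)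

/-- `β`-Hölder norm of a two-parameter function on `[0,1]²` (vanishing on the diagonal). -/
def rnorm {F : Type*} [NormedAddCommGroup F] (β : ℝ) (W : ℝ → ℝ → F) : ℝ :=
  sSup {r | ∃ s ∈ Icc (0:ℝ) 1, ∃ t ∈ Icc (0:ℝ) 1, s ≠ t ∧ r = ‖W s t‖ / |s - t| ^ β}

/-- Finiteness of the `β`-Hölder norm of a two-parameter function. -/
def RBddOn {F : Type*} [NormedAddCommGroup F] (β : ℝ) (W : ℝ → ℝ → F) : Prop :=
  ∃ C : ℝ, ∀ s ∈ Icc (0:ℝ) 1, ∀ t ∈ Icc (0:ℝ) 1, ‖W s t‖ ≤ C * |s - t| ^ β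

/-- `(X, 𝕏²)` is a `γ`-rough path: `X` is `γ`-Hölder, the area process `𝕏²` is continuous,
satisfies the compatibility (Chen) relation and has finite `2γ`-Hölder norm. -/
structure IsRoughPath (γ : ℝ) (X : ℝ → E3) (XX : ℝ → ℝ → M3) : Prop where
  cont : ContinuousOn X (Icc (0:ℝ) 1)
  holder : HolderOn γ X
  cont2 : ContinuousOn (fun p : ℝ × ℝ => XX p.1 p.2) (Icc (0:ℝ) 1 ×ˢ Icc (0:ℝ) 1)
  chen : ∀ ξ ∈ Icc (0:ℝ) 1, ∀ η ∈ Icc (0:ℝ) 1, ∀ ρ ∈ Icc (0:ℝ) 1,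
    XX ξ ρ - XX ξ η - XX η ρ = oProd (X ξ - X η) (X η - X ρ)
  bdd : RBddOn (2 * γ) XX

/-- Remainder `R^Y_{ηξ} = Y_ξ - Y_η - Y'_η (X_ξ - X_η)` of a controlled path. -/
def ctrlRem (X Y : ℝ → E3) (Y' : ℝ → M3) (η ξ : ℝ) : E3 :=
  Y ξ - Y η - Y' η (X ξ - X η)

/-- `(Y, Y')` is a (closed) path weakly controlled by `X`, i.e. `Y ∈ 𝒟_X`. -/
structure IsControlled (γ : ℝ) (X Y : ℝ → E3) (Y' : ℝ → M3) : Prop where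
  closed : Y 0 = Y 1
  cont : ContinuousOn Y (Icc (0:ℝ) 1)
  contD : ContinuousOn Y' (Icc (0:ℝ) 1)
  holderD : HolderOn γ Y'
  rem : RBddOn (2 * γ) (fun η ξ => ctrlRem X Y Y' η ξ)

/-- The norm `‖Y‖_D = ‖Y'‖_γ + ‖R^Y‖_{2γ} + ‖Y'‖_∞` on `𝒟_X`. -/
def dnorm (γ : ℝ) (X Y : ℝ → E3) (Y' : ℝ → M3) : ℝ :=
  hSemi γ Y' + rnorm (2 * γ) (fun η ξ => ctrlRem X Y Y' η ξ) + sNorm Y'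

/-- The norm `‖Y‖_D^* = ‖Y‖_D + ‖Y‖_∞`. -/
def dnormStar (γ : ℝ) (X Y : ℝ → E3) (Y' : ℝ → M3) : ℝ :=
  dnorm γ X Y Y' + sNorm Y

/-- The constant `C_X = 1 + ‖X‖_γ + ‖𝕏²‖_{2γ}`. -/
def CXconst (γ : ℝ) (X : ℝ → E3) (XX : ℝ → ℝ → M3) : ℝ :=
  1 + hSemi γ X + rnorm (2 * γ) XX

/-- The compensator `P W Qᵀ` (matrix product), i.e. `(P W Qᵀ)^{ij} = P^{ik} W^{kl} Q^{jl}`. -/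
def ctrlComp (P Q W : M3) : M3 := P ∘L W ∘L (ContinuousLinearMap.adjoint Q)

/-- Compensated Riemann sum
`Σ_i [ Y_{t_i} ⊗ (Z_{t_{i+1}} - Z_{t_i}) + Y'_{t_i} Z'_{t_i} 𝕏²_{t_{i+1} t_i} ]`
for the rough integral `∫ Y ⊗ dZ` of two weakly controlled paths. -/
def roughPairRS (XX : ℝ → ℝ → M3) (Y Z : ℝ → E3) (Y' Z' : ℝ → M3)
    {a b : ℝ} (P : Ptn a b) : M3 :=
  ∑ i ∈ Finset.range P.n,
    (oProd (Y (P.t i)) (Z (P.t (i + 1)) - Z (P.t i))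
      + ctrlComp (Y' (P.t i)) (Z' (P.t i)) (XX (P.t (i + 1)) (P.t i)))

/-- The contraction `Σ_{k,l} W^{kl} (W'(e_k))(Z'(e_l))`, the compensator of a matrix-valued
controlled integrand `W` (with controlled derivative `W'`) against `dZ`. -/
def comp2 (W' : E3 →L[ℝ] M3) (Z' : M3) (W : M3) : E3 :=
  ∑ k : Fin 3, ∑ l : Fin 3, ecomp k (W (e3 l)) • (W' (e3 k)) (Z' (e3 l))

/-- Compensated Riemann sum for the rough line integral `∫_0^1 A(x - Z_η) dZ_η` along a path
`Z` weakly controlled by `X`, the integrand `η ↦ A(x - Z_η)` having controlled derivative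
`-∇A(x - Z_η) ∘ Z'_η`. -/
def roughVelRS (A : E3 → M3) (XX : ℝ → ℝ → M3) (Z : ℝ → E3) (Z' : ℝ → M3)
    (x : E3) {a b : ℝ} (P : Ptn a b) : E3 :=
  ∑ i ∈ Finset.range P.n,
    (A (x - Z (P.t i)) (Z (P.t (i + 1)) - Z (P.t i))
      + comp2 (-((fderiv ℝ A (x - Z (P.t i))).comp (Z' (P.t i)))) (Z' (P.t i))
          (XX (P.t (i + 1)) (P.t i)))

/-- `V = V^Z` is the rough velocity field `V^Z(x) = ∫_0^1 A(x - Z_η) dZ_η`, each value being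
the limit of compensated Riemann sums. -/
def IsRoughVelocity (A : E3 → M3) (XX : ℝ → ℝ → M3) (Z : ℝ → E3) (Z' : ℝ → M3)
    (V : E3 → E3) : Prop :=
  ∀ x : E3, RSLimit 0 1 (fun P => roughVelRS A XX Z Z' x P) (V x)

/-- Continuity of `t ↦ (Y(t), Y'(t))` from `[0,T]` into `𝒟_X` (with the norm `‖·‖_D^*`). -/
def ContDT (γ T : ℝ) (X : ℝ → E3) (Y : ℝ → ℝ → E3) (Y' : ℝ → ℝ → M3) : Prop :=
  ∀ t ∈ Icc 0 T, ∀ ε > 0, ∃ δ > 0, ∀ s ∈ Icc 0 T, |s - t| ≤ δ →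
    dnormStar γ X (fun ξ => Y s ξ - Y t ξ) (fun ξ => Y' s ξ - Y' t ξ) ≤ ε

/-- Membership in `𝐃_{X,T} = C([0,T], 𝒟_X)`. -/
def MemDT (γ T : ℝ) (X : ℝ → E3) (Y : ℝ → ℝ → E3) (Y' : ℝ → ℝ → M3) : Prop :=
  (∀ t ∈ Icc 0 T, IsControlled γ X (Y t) (Y' t)) ∧ ContDT γ T X Y Y'

/-- The norm `‖Y‖_{𝐃_{X,T}} = sup_{t ∈ [0,T]} ‖Y(t)‖_D^*`. -/
def dxnorm (γ T : ℝ) (X : ℝ → E3) (Y : ℝ → ℝ → E3) (Y' : ℝ → ℝ → M3) : ℝ :=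
  sSup {r | ∃ t ∈ Icc 0 T, r = dnormStar γ X (Y t) (Y' t)}

/-- `(Y, Y')` solves the vortex filament equation on `[0,T]` with initial condition `X`,
the velocity fields being given by rough line integrals over the rough path `(X, 𝕏²)`. -/
def IsRoughSolution (T : ℝ) (A : E3 → M3) (X : ℝ → E3) (XX : ℝ → ℝ → M3)
    (Y : ℝ → ℝ → E3) (Y' : ℝ → ℝ → M3) : Prop :=
  ∃ v : ℝ → E3 → E3,
    (∀ s ∈ Icc 0 T, IsRoughVelocity A XX (Y s) (Y' s) (v s)) ∧
    (∀ t ∈ Icc 0 T, ∀ ξ ∈ Icc (0:ℝ) 1, Y t ξ = X ξ + ∫ s in (0:ℝ)..t, v s (Y s ξ)) ∧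
    (∀ t ∈ Icc 0 T, ∀ ξ ∈ Icc (0:ℝ) 1, Y' t ξ = Fmap' v Y Y' t ξ)

/-- `YY` is the lift (area process) `𝕐²_{ab} = ∫_a^b (Y_η - Y_a) ⊗ dY_η` of the weakly
controlled path `(Y, Y')`, defined through compensated Riemann sums. -/
def IsLift (XX : ℝ → ℝ → M3) (Y : ℝ → E3) (Y' : ℝ → M3) (YY : ℝ → ℝ → M3) : Prop :=
  ∀ a ∈ Icc (0:ℝ) 1, ∀ b ∈ Icc (0:ℝ) 1, a ≤ b →
    RSLimit a b (fun P => ∑ i ∈ Finset.range P.n,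
      (oProd (Y (P.t i) - Y a) (Y (P.t (i + 1)) - Y (P.t i))
        + ctrlComp (Y' (P.t i)) (Y' (P.t i)) (XX (P.t (i + 1)) (P.t i)))) (YY a b)

/-- `ε`-approximation `ξ ↦ ∫_0^ξ (U_{ρ+ε} - U_ρ)(W_{ρ+ε} - W_ρ) dρ / ε` of the covariation
(the processes being extended by their value at `1`). -/
def covApprox (U W : ℝ → ℝ) (ε ξ : ℝ) : ℝ :=
  ∫ ρ in (0:ℝ)..ξ, (U (min (ρ + ε) 1) - U ρ) * (W (min (ρ + ε) 1) - W ρ) / ε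

/-- `C = [U, W]` is the covariation of the processes `U` and `W`: the `ε`-approximations
converge uniformly in probability (ucp) as `ε → 0⁺`. -/
def HasCovariation {Ω : Type*} [MeasurableSpace Ω] (P : Measure Ω)
    (U W : Ω → ℝ → ℝ) (C : Ω → ℝ → ℝ) : Prop :=
  ∀ δ : ℝ, 0 < δ →
    Tendsto (fun ε : ℝ =>
        P {ω | δ ≤ ⨆ ξ : Icc (0:ℝ) 1, |covApprox (U ω) (W ω) ε ξ.1 - C ω ξ.1|})
      (𝓝[>] (0:ℝ)) (𝓝 (0:ℝ≥0∞))

/-! ### Almost additive functions and the maximal inequality -/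

section Sewing

variable {E : Type*} [NormedAddCommGroup E]

/-- A two-parameter function on `[0,1]` vanishing on the diagonal, whose defect of additivity
`Ξ s t - Ξ s u - Ξ u t` is at most `K (t - s) ^ θ`. -/
structure AlmostAdd (K θ : ℝ) (Ξ : ℝ → ℝ → E) : Prop where
  diag : ∀ s, Ξ s s = 0
  defect : ∀ s u t, 0 ≤ s → s ≤ u → u ≤ t → t ≤ 1 →
    ‖Ξ s t - Ξ s u - Ξ u t‖ ≤ K * (t - s) ^ θ

/-- The constant `2 / (1 - 2 ^ (1 - θ))`, the fixed point of `c ↦ 2 * 2 ^ (-θ) * c + 2`. -/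
def sewC (θ : ℝ) : ℝ := 2 / (1 - 2 ^ (1 - θ))

lemma ratio_lt_one {θ : ℝ} (hθ : 1 < θ) : (2:ℝ) ^ (1 - θ) < 1 :=
  Real.rpow_lt_one_of_one_lt_of_neg (by norm_num) (by linarith)

lemma one_le_sewC {θ : ℝ} (hθ : 1 < θ) : 1 ≤ sewC θ := by
  have h1 := ratio_lt_one hθ
  have h2 : (0:ℝ) < 2 ^ (1 - θ) := Real.rpow_pos_of_pos (by norm_num) _
  rw [sewC, le_div_iff₀ (by linarith)]
  linarith

lemma sewC_fixed {θ : ℝ} (hθ : 1 < θ) : 2 * (sewC θ * (1 / 2) ^ θ) + 2 = sewC θ := by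
  have h1 := ratio_lt_one hθ
  have h2 : (2:ℝ) ^ (1 - θ) = 2 * (1 / 2) ^ θ := by
    rw [Real.rpow_sub (by norm_num), Real.rpow_one, one_div, Real.inv_rpow (by norm_num)]
    rfl
  have h3 : sewC θ * (1 - 2 ^ (1 - θ)) = 2 := by
    rw [sewC]; exact div_mul_cancel₀ _ (by linarith)
  rw [h2] at h3
  linarith

lemma exists_bracket (t : ℕ → ℝ) (m : ℝ) (h0 : t 0 ≤ m) :
    ∀ n, 0 < n → m ≤ t n → ∃ j < n, t j ≤ m ∧ m ≤ t (j + 1)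
  | 0, h, _ => absurd h (lt_irrefl 0)
  | n + 1, _, hn => by
    by_cases hm : t n ≤ m
    · exact ⟨n, Nat.lt_succ_self n, hm, hn⟩
    · have hpos : 0 < n := Nat.pos_of_ne_zero (by rintro rfl; exact hm h0)
      obtain ⟨j, hj, h⟩ := exists_bracket t m h0 n hpos (le_of_not_ge hm)
      exact ⟨j, hj.trans (Nat.lt_succ_self n), h⟩

lemma mono_le {t : ℕ → ℝ} {n : ℕ} (h : ∀ i < n, t i ≤ t (i + 1)) {i j : ℕ} (hij : i ≤ j)
    (hj : j ≤ n) : t i ≤ t j := by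
  induction j, hij using Nat.le_induction with
  | base => exact le_rfl
  | succ j _ ih => exact (ih (by omega)).trans (h j (by omega))

/-- Young's maximal inequality, uniform in the number of points of the partition. The partition is
cut at the interval containing the midpoint of `[t 0, t n]`; the two remaining pieces have at most
half the length, so the induction hypothesis applies with a gain of `2 ^ (-θ)` on each. -/
lemma maximal_ineq {K θ : ℝ} {Ξ : ℝ → ℝ → E} (hK : 0 ≤ K) (hθ : 1 < θ)
    (H : AlmostAdd K θ Ξ) (n : ℕ) : ∀ t : ℕ → ℝ, (∀ i < n, t i ≤ t (i + 1)) →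
      0 ≤ t 0 → t n ≤ 1 →
      ‖∑ i ∈ Finset.range n, Ξ (t i) (t (i + 1)) - Ξ (t 0) (t n)‖
        ≤ sewC θ * K * (t n - t 0) ^ θ := by
  induction n using Nat.strong_induction_on with
  | _ n ih =>
  intro t ht h0 h1
  rcases Nat.eq_zero_or_pos n with rfl | hn
  · simp [H.diag, Real.zero_rpow (show θ ≠ 0 by linarith)]
  have h0n : t 0 ≤ t n := mono_le ht (Nat.zero_le n) le_rfl
  obtain ⟨j, hj, hjm, hmj⟩ := exists_bracket t ((t 0 + t n) / 2) (by linarith) n hn (by linarith)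
  obtain ⟨m, rfl⟩ : ∃ m, n = j + 1 + m := ⟨n - (j + 1), by omega⟩
  set N := j + 1 + m with hN
  have h0j : t 0 ≤ t j := mono_le ht (Nat.zero_le j) (by omega)
  have hjj : t j ≤ t (j + 1) := ht j hj
  have hjN : t (j + 1) ≤ t N := mono_le ht (by omega) le_rfl
  have A := ih j hj t (fun i hi => ht i (by omega)) h0 (by linarith)
  have B := ih m (by omega) (fun i => t (j + 1 + i)) (fun i hi => ht (j + 1 + i) (by omega))
    (by simp only [add_zero]; linarith) h1
  have D1 := H.defect (t 0) (t j) (t N) h0 h0j (by linarith) h1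
  have D2 := H.defect (t j) (t (j + 1)) (t N) (by linarith) hjj hjN h1
  simp only [add_zero] at B
  rw [Finset.sum_range_add, Finset.sum_range_succ]
  set L := t N - t 0 with hL
  have hLnn : 0 ≤ L := by linarith
  have hC : 0 ≤ sewC θ * K := mul_nonneg (by linarith [one_le_sewC hθ]) hK
  have half : ∀ x, 0 ≤ x → x ≤ L / 2 → x ^ θ ≤ (1 / 2) ^ θ * L ^ θ := by
    intro x hx hxL
    rw [← Real.mul_rpow (by norm_num) hLnn]
    exact Real.rpow_le_rpow hx (by linarith) (by linarith)
  have A' := A.trans (mul_le_mul_of_nonneg_left (half _ (by linarith) (by linarith)) hC)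
  have B' := B.trans (mul_le_mul_of_nonneg_left
    (half _ (by linarith [hN]) (by linarith [hN])) hC)
  have D2' := D2.trans (mul_le_mul_of_nonneg_left
    (Real.rpow_le_rpow (by linarith) (show t N - t j ≤ L by linarith) (by linarith)) hK)
  have key : ∀ a b c d e f g : E, a + b + c - d
      = (a - e) + (c - f) - ((d - e - g) + (g - b - f)) := by
    intros; abel
  rw [key _ _ _ _ (Ξ (t 0) (t j)) (Ξ (t (j + 1)) (t N)) (Ξ (t j) (t N))]
  refine (norm_sub_le _ _).trans ((add_le_add (norm_add_le _ _) (norm_add_le _ _)).trans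
    ((add_le_add (add_le_add A' B') (add_le_add D1 D2')).trans (le_of_eq ?_)))
  linear_combination (K * L ^ θ) * sewC_fixed hθ

/-! ### Dyadic sums and sewing -/

/-- Sum of `Ξ` along the dyadic grid of level `n` on `[0,1]`, moved by the map `c`
(a truncation of `[0,1]` onto a subinterval). -/
def dySum (Ξ : ℝ → ℝ → E) (c : ℝ → ℝ) (n : ℕ) : E :=
  ∑ i ∈ Finset.range (2 ^ n), Ξ (c (i / 2 ^ n)) (c ((i + 1 : ℕ) / 2 ^ n))

lemma sum_range_two_mul (f : ℕ → E) (N : ℕ) :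
    ∑ i ∈ Finset.range (2 * N), f i = ∑ i ∈ Finset.range N, (f (2 * i) + f (2 * i + 1)) := by
  induction N with
  | zero => simp
  | succ N ih =>
    rw [show 2 * (N + 1) = 2 * N + 1 + 1 by ring, Finset.sum_range_succ, Finset.sum_range_succ, ih,
      Finset.sum_range_succ, add_assoc]

lemma grid_sum (θ : ℝ) (n : ℕ) :
    (2:ℝ) ^ n * (1 / 2 ^ n) ^ θ = ((2:ℝ) ^ (1 - θ)) ^ n := by
  have h : ((2:ℝ) ^ n) = (2:ℝ) ^ (n:ℝ) := (Real.rpow_natCast 2 n).symm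
  rw [← Real.rpow_natCast (_ ^ _) n, ← Real.rpow_mul (by norm_num), h, one_div,
    ← Real.rpow_neg (by norm_num), ← Real.rpow_mul (by norm_num),
    ← Real.rpow_add (by norm_num)]
  congr 1; ring

/-- The bound `2 ^ n` times `K (2 ^ (-n)) ^ θ` for a sum of errors, one per dyadic interval. -/
lemma norm_grid_sum_le {K θ : ℝ} (n : ℕ) (g : ℕ → E)
    (h : ∀ i < 2 ^ n, ‖g i‖ ≤ K * (1 / 2 ^ n) ^ θ) :
    ‖∑ i ∈ Finset.range (2 ^ n), g i‖ ≤ K * ((2:ℝ) ^ (1 - θ)) ^ n := by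
  refine (norm_sum_le _ _).trans
    ((Finset.sum_le_sum fun i hi => h i (Finset.mem_range.1 hi)).trans (le_of_eq ?_))
  rw [Finset.sum_const, Finset.card_range, nsmul_eq_mul, ← grid_sum]
  push_cast; ring

lemma grid_mem {n i : ℕ} (hi : i ≤ 2 ^ n) : (i:ℝ) / 2 ^ n ∈ Icc (0:ℝ) 1 := by
  have : (i:ℝ) ≤ 2 ^ n := by exact_mod_cast hi
  exact ⟨by positivity, (div_le_one (by positivity)).2 this⟩

lemma grid_step (n i : ℕ) : ((i + 1 : ℕ) : ℝ) / 2 ^ n = i / 2 ^ n + 1 / 2 ^ n := by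
  push_cast; ring

lemma dySum_succ_sub {K θ : ℝ} {Ξ : ℝ → ℝ → E} (hK : 0 ≤ K) (hθ : 1 < θ)
    (H : AlmostAdd K θ Ξ) {t : ℝ} (ht : t ∈ Icc (0:ℝ) 1) (n : ℕ) :
    ‖dySum Ξ (min · t) n - dySum Ξ (min · t) (n + 1)‖ ≤ K * ((2:ℝ) ^ (1 - θ)) ^ n := by
  rw [dySum, dySum, show 2 ^ (n + 1) = 2 * 2 ^ n by ring, sum_range_two_mul,
    ← Finset.sum_sub_distrib]
  refine norm_grid_sum_le n _ fun i hi => ?_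
  have e1 : ((2 * i : ℕ) : ℝ) / 2 ^ (n + 1) = i / 2 ^ n := by
    push_cast; rw [pow_succ]; field_simp
  have e2 : ((2 * i + 1 + 1 : ℕ) : ℝ) / 2 ^ (n + 1) = (i + 1 : ℕ) / 2 ^ n := by
    push_cast; rw [pow_succ]; field_simp; ring
  rw [e1, e2, ← sub_sub]
  have hx := grid_mem hi.le
  have hm1 : (i:ℝ) / 2 ^ n ≤ ((2 * i + 1 : ℕ) : ℝ) / 2 ^ (n + 1) := by
    rw [← e1]; gcongr; omega
  have hm2 : ((2 * i + 1 : ℕ) : ℝ) / 2 ^ (n + 1) ≤ ((i + 1 : ℕ) : ℝ) / 2 ^ n := by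
    rw [← e2]; gcongr; omega
  refine (H.defect _ _ _ (le_min hx.1 ht.1) (min_le_min_right t hm1) (min_le_min_right t hm2)
    ((min_le_right _ _).trans ht.2)).trans (mul_le_mul_of_nonneg_left ?_ hK)
  refine Real.rpow_le_rpow (sub_nonneg.2 (min_le_min_right t (hm1.trans hm2))) ?_ (by linarith)
  have hs := grid_step n i
  have hp : (0:ℝ) ≤ 1 / 2 ^ n := by positivity
  rcases le_total ((i:ℝ) / 2 ^ n) t with h | h
  · rw [min_eq_left h]
    linarith [min_le_left (((i + 1 : ℕ) : ℝ) / 2 ^ n) t]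
  · rw [min_eq_right h]
    linarith [min_le_right (((i + 1 : ℕ) : ℝ) / 2 ^ n) t]

/-- Splitting at `s` a dyadic sum truncated at `t`: only an interval with `s` in its interior
contributes an error. -/
lemma dySum_split {K θ : ℝ} {Ξ : ℝ → ℝ → E} (hK : 0 ≤ K) (hθ : 1 < θ)
    (H : AlmostAdd K θ Ξ) {s t : ℝ} (hst : s ≤ t) (n : ℕ) :
    ‖dySum Ξ (min · t) n - dySum Ξ (min · s) n - dySum Ξ (fun x => max s (min x t)) n‖
      ≤ K * ((2:ℝ) ^ (1 - θ)) ^ n := by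
  simp only [dySum]
  rw [← Finset.sum_sub_distrib, ← Finset.sum_sub_distrib]
  refine norm_grid_sum_le n _ fun i hi => ?_
  have hx := grid_mem hi.le
  have hy := grid_mem (n := n) (i := i + 1) hi
  have hs := grid_step n i
  have hp : (0:ℝ) ≤ 1 / 2 ^ n := by positivity
  generalize (i:ℝ) / 2 ^ n = x at *
  generalize ((i + 1 : ℕ):ℝ) / 2 ^ n = y at *
  have hxy : x ≤ y := by linarith
  have hnn : 0 ≤ K * (1 / 2 ^ n) ^ θ := by positivity
  rcases le_total y s with h | h
  · simpa [min_eq_left h, min_eq_left (hxy.trans h), min_eq_left (h.trans hst),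
      min_eq_left ((hxy.trans h).trans hst), max_eq_left h, max_eq_left (hxy.trans h), H.diag]
      using hnn
  have hyt : s ≤ min y t := le_min h hst
  rcases le_total s x with h' | h'
  · simpa [min_eq_right h, min_eq_right h', max_eq_right hyt, max_eq_right (le_min h' hst), H.diag]
      using hnn
  simp only [min_eq_right h, min_eq_left h', max_eq_right hyt, min_eq_left (h'.trans hst),
    max_eq_left h']
  refine (H.defect x s _ hx.1 h' hyt ((min_le_left _ _).trans hy.2)).trans
    (mul_le_mul_of_nonneg_left (Real.rpow_le_rpow (by linarith) ?_ (by linarith)) hK)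
  linarith [min_le_left y t]

/-- Sewing: `Ξ` is approximated to order `θ` by the increments of the function `J`, the limit of
the dyadic sums. -/
lemma sewing [CompleteSpace E] {K θ : ℝ} {Ξ : ℝ → ℝ → E} (hK : 0 ≤ K) (hθ : 1 < θ)
    (H : AlmostAdd K θ Ξ) : ∃ J : ℝ → E, ∀ s t, 0 ≤ s → s ≤ t → t ≤ 1 →
      ‖J t - J s - Ξ s t‖ ≤ sewC θ * K * (t - s) ^ θ := by
  have hr := ratio_lt_one hθ
  have hr0 : (0:ℝ) ≤ 2 ^ (1 - θ) := by positivity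
  have lim : ∀ t, ∃ a, t ∈ Icc (0:ℝ) 1 → Tendsto (dySum Ξ (min · t)) atTop (𝓝 a) := by
    intro t
    by_cases ht : t ∈ Icc (0:ℝ) 1
    · have hc : CauchySeq (dySum Ξ (min · t)) := by
        refine cauchySeq_of_le_geometric _ K hr fun n => ?_
        rw [dist_eq_norm]
        exact dySum_succ_sub hK hθ H ht n
      obtain ⟨a, ha⟩ := cauchySeq_tendsto_of_complete hc
      exact ⟨a, fun _ => ha⟩
    · exact ⟨0, fun h => absurd h ht⟩
  choose J hJ using lim
  refine ⟨J, fun s t h0 hst h1 => ?_⟩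
  have L1 : Tendsto (fun n => ‖dySum Ξ (min · t) n - dySum Ξ (min · s) n - Ξ s t‖) atTop
      (𝓝 ‖J t - J s - Ξ s t‖) :=
    (((hJ t ⟨h0.trans hst, h1⟩).sub (hJ s ⟨h0, hst.trans h1⟩)).sub_const _).norm
  have L2 : Tendsto (fun n => K * ((2:ℝ) ^ (1 - θ)) ^ n + sewC θ * K * (t - s) ^ θ) atTop
      (𝓝 (sewC θ * K * (t - s) ^ θ)) := by
    simpa using ((tendsto_pow_atTop_nhds_zero_of_lt_one hr0 hr).const_mul K).add_const
      (sewC θ * K * (t - s) ^ θ)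
  refine le_of_tendsto_of_tendsto' L1 L2 fun n => ?_
  have M := maximal_ineq hK hθ H (2 ^ n) (fun i => max s (min (i / 2 ^ n) t))
    (fun i _ => max_le_max_left _ (min_le_min_right _ (by gcongr; omega)))
    (by simp [h0]) (by simp [h1, hst.trans h1])
  have e0 : max s (min (((0:ℕ):ℝ) / 2 ^ n) t) = s := by
    simp only [Nat.cast_zero, zero_div]
    exact max_eq_left ((min_le_left _ _).trans h0)
  have e1 : max s (min (((2 ^ n : ℕ):ℝ) / 2 ^ n) t) = t := by
    rw [Nat.cast_pow, Nat.cast_ofNat, div_self (by positivity), min_eq_right h1, max_eq_right hst]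
  simp only [e0, e1] at M
  calc _ = ‖(dySum Ξ (min · t) n - dySum Ξ (min · s) n - dySum Ξ (fun x => max s (min x t)) n)
        + (dySum Ξ (fun x => max s (min x t)) n - Ξ s t)‖ := by congr 1; abel
    _ ≤ _ := (norm_add_le _ _).trans (add_le_add (dySum_split hK hθ H hst n) M)

/-! ### Convergence of partition sums -/

/-- If `Ξ` is approximated to order `θ > 1` by the increments of `J`, then its partition sums
converge to the increment of `J`, at rate `mesh ^ (θ - 1)`. -/
lemma rsLimit_of_approx {D θ : ℝ} {Ξ : ℝ → ℝ → E} {J : ℝ → E} (hD : 0 ≤ D) (hθ : 1 < θ)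
    (hJ : ∀ s t, 0 ≤ s → s ≤ t → t ≤ 1 → ‖J t - J s - Ξ s t‖ ≤ D * (t - s) ^ θ)
    {a b : ℝ} (ha : 0 ≤ a) (hb : b ≤ 1) :
    RSLimit a b (fun P => ∑ i ∈ Finset.range P.n, Ξ (P.t i) (P.t (i + 1))) (J b - J a) := by
  intro ε hε
  have hq : 0 < ε / (D + 1) := by positivity
  refine ⟨(ε / (D + 1)) ^ (θ - 1)⁻¹, by positivity, fun P hP => ?_⟩
  have hδ : ((ε / (D + 1)) ^ (θ - 1)⁻¹) ^ (θ - 1) = ε / (D + 1) :=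
    Real.rpow_inv_rpow hq.le (by linarith)
  set δ := (ε / (D + 1)) ^ (θ - 1)⁻¹
  have hJs : J b - J a = ∑ i ∈ Finset.range P.n, (J (P.t (i + 1)) - J (P.t i)) := by
    rw [Finset.sum_range_sub (fun i => J (P.t i)), P.first, P.last]
  have hts : b - a = ∑ i ∈ Finset.range P.n, (P.t (i + 1) - P.t i) := by
    rw [Finset.sum_range_sub P.t, P.first, P.last]
  rw [norm_sub_rev]
  show ‖J b - J a - ∑ i ∈ Finset.range P.n, Ξ (P.t i) (P.t (i + 1))‖ ≤ ε
  rw [hJs, ← Finset.sum_sub_distrib]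
  calc _ ≤ ∑ i ∈ Finset.range P.n, D * (ε / (D + 1)) * (P.t (i + 1) - P.t i) := by
        refine (norm_sum_le _ _).trans (Finset.sum_le_sum fun i hi => ?_)
        have hi := Finset.mem_range.1 hi
        have m0 := mono_le P.mono (Nat.zero_le i) hi.le
        have m1 := mono_le P.mono (show i + 1 ≤ P.n from hi) le_rfl
        rw [P.first] at m0
        rw [P.last] at m1
        have h2 := P.mono i hi
        have hx : 0 ≤ P.t (i + 1) - P.t i := by linarith
        refine (hJ _ _ (by linarith) h2 (by linarith)).trans ?_
        rw [mul_assoc]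
        refine mul_le_mul_of_nonneg_left ?_ hD
        calc (P.t (i + 1) - P.t i) ^ θ
            = (P.t (i + 1) - P.t i) ^ (θ - 1) * (P.t (i + 1) - P.t i) := by
              rw [← Real.rpow_add_one' hx (by linarith)]; congr 1; ring
          _ ≤ _ := by
              rw [← hδ]
              exact mul_le_mul_of_nonneg_right
                (Real.rpow_le_rpow hx (hP i hi) (by linarith)) hx
    _ = D * (ε / (D + 1)) * (b - a) := by rw [← Finset.mul_sum, ← hts]
    _ ≤ D * (ε / (D + 1)) * 1 := mul_le_mul_of_nonneg_left (by linarith) (by positivity)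
    _ ≤ ε := by
        rw [mul_one, ← mul_div_assoc, div_le_iff₀ (by positivity)]
        nlinarith

/-! ### Hölder paths -/

lemma hSemi_nonneg (γ : ℝ) (X : ℝ → E) : 0 ≤ hSemi γ X := by
  refine Real.sSup_nonneg ?_
  rintro r ⟨s, _, t, _, _, rfl⟩
  positivity

lemma norm_sub_le_hSemi {γ : ℝ} (hγ : 0 < γ) {X : ℝ → E} (hX : HolderOn γ X) {s t : ℝ}
    (hs : s ∈ Icc (0:ℝ) 1) (ht : t ∈ Icc (0:ℝ) 1) : ‖X s - X t‖ ≤ hSemi γ X * |s - t| ^ γ := by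
  rcases eq_or_ne s t with rfl | hne
  · simp [Real.zero_rpow hγ.ne']
  obtain ⟨C, hC⟩ := hX
  rw [← div_le_iff₀ (Real.rpow_pos_of_pos (abs_pos.2 (sub_ne_zero.2 hne)) _)]
  refine le_csSup ⟨C, ?_⟩ ⟨s, hs, t, ht, hne, rfl⟩
  rintro r ⟨u, hu, v, hv, huv, rfl⟩
  rw [div_le_iff₀ (Real.rpow_pos_of_pos (abs_pos.2 (sub_ne_zero.2 huv)) _)]
  exact hC u hu v hv

end Sewing

lemma norm_oProd (a b : E3) : ‖oProd a b‖ = ‖b‖ * ‖a‖ := by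
  rw [oProd, ContinuousLinearMap.norm_smulRight_apply, innerSL_apply_norm]

/-- The defect of `X s ⊗ (Y t - Y s)` at `u` is `-(X u - X s) ⊗ (Y t - Y u)`, of order `2γ`. -/
lemma almostAdd_oProd {γ : ℝ} (hγ : 0 < γ) {X Y : ℝ → E3} (hX : HolderOn γ X)
    (hY : HolderOn γ Y) :
    AlmostAdd (hSemi γ X * hSemi γ Y) (2 * γ) (fun s t => oProd (X s) (Y t - Y s)) where
  diag s := by simp [oProd]
  defect s u t h0 hsu hut h1 := by
    have e : oProd (X s) (Y t - Y s) - oProd (X s) (Y u - Y s) - oProd (X u) (Y t - Y u)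
        = oProd (X s - X u) (Y t - Y u) := by
      ext1 v
      simp only [oProd, _root_.sub_apply, ContinuousLinearMap.smulRight_apply,
        innerSL_apply_apply, inner_sub_left]
      module
    rw [e, norm_oProd]
    have hs : s ∈ Icc (0:ℝ) 1 := ⟨h0, by linarith⟩
    have hu : u ∈ Icc (0:ℝ) 1 := ⟨by linarith, by linarith⟩
    have ht : t ∈ Icc (0:ℝ) 1 := ⟨by linarith, h1⟩
    have b1 : ‖X s - X u‖ ≤ hSemi γ X * (t - s) ^ γ := by
      refine (norm_sub_le_hSemi hγ hX hs hu).trans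
        (mul_le_mul_of_nonneg_left ?_ (hSemi_nonneg _ _))
      rw [abs_sub_comm, abs_of_nonneg (by linarith)]
      exact Real.rpow_le_rpow (by linarith) (by linarith) hγ.le
    have b2 : ‖Y t - Y u‖ ≤ hSemi γ Y * (t - s) ^ γ := by
      refine (norm_sub_le_hSemi hγ hY ht hu).trans
        (mul_le_mul_of_nonneg_left ?_ (hSemi_nonneg _ _))
      rw [abs_of_nonneg (by linarith)]
      exact Real.rpow_le_rpow (by linarith) (by linarith) hγ.le
    refine (mul_le_mul b2 b1 (norm_nonneg _) ((norm_nonneg _).trans b2)).trans (le_of_eq ?_)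
    rw [two_mul, Real.rpow_add_of_nonneg (by linarith) hγ.le hγ.le]
    ring

/-- Young's integral. For `1/2 < γ ≤ 1` there is a constant `C_γ ≥ 1`,
depending only on `γ`, such that for any `γ`-Hölder `X, Y : [0,1] → ℝ³` the Riemann–Stieltjes
sums `Σ_i X_{ξ_i} ⊗ (Y_{ξ_{i+1}} - Y_{ξ_i})` converge, as the mesh tends to zero, to a limit
`I η ξ = ∫_η^ξ X_ρ ⊗ dY_ρ` (hence coinciding with the Riemann–Stieltjes integral whenever the
latter exists), and `|∫_η^ξ (X_ρ - X_η) ⊗ dY_ρ| ≤ C_γ ‖X‖_γ ‖Y‖_γ |ξ - η|^{2γ}`. -/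
theorem statement_0 (γ : ℝ) (hγ : 1 / 2 < γ) (hγ1 : γ ≤ 1) :
    ∃ C : ℝ, 1 ≤ C ∧
      ∀ X Y : ℝ → E3, HolderOn γ X → HolderOn γ Y →
        ∃ I : ℝ → ℝ → M3,
          (∀ η ∈ Icc (0:ℝ) 1, ∀ ξ ∈ Icc (0:ℝ) 1, η ≤ ξ →
            RSLimit η ξ
              (fun P => ∑ i ∈ Finset.range P.n,
                oProd (X (P.t i)) (Y (P.t (i + 1)) - Y (P.t i))) (I η ξ)) ∧
          (∀ η ∈ Icc (0:ℝ) 1, ∀ ξ ∈ Icc (0:ℝ) 1, η ≤ ξ →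
            ‖I η ξ - oProd (X η) (Y ξ - Y η)‖ ≤
              C * hSemi γ X * hSemi γ Y * (ξ - η) ^ (2 * γ)) := by
  have hθ : 1 < 2 * γ := by linarith
  refine ⟨sewC (2 * γ), one_le_sewC hθ, fun X Y hX hY => ?_⟩
  have hK : 0 ≤ hSemi γ X * hSemi γ Y := mul_nonneg (hSemi_nonneg _ _) (hSemi_nonneg _ _)
  obtain ⟨J, hJ⟩ := sewing hK hθ (almostAdd_oProd (by linarith) hX hY)
  refine ⟨fun η ξ => J ξ - J η, fun η hη ξ hξ _ => ?_, fun η hη ξ hξ h => ?_⟩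
  · exact rsLimit_of_approx (mul_nonneg (by linarith [one_le_sewC hθ]) hK) hθ hJ hη.1 hξ.2
  · exact (hJ η ξ hη.1 h hξ.2).trans (le_of_eq (by ring))

end
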